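/- Let K ≥ 2, τ > 0, and β ∈ ℝ^K with all β_i > 0, let f(x) = (K−1)! τ^{K−1} (∑_{j=1}^K β_j/x_j^τ)^{−K} ∏_{i=1}^K β_i/x_i^{τ+1} be the Concrete density on S_K, and write k(x) = ∑_{j=1}^K β_j/x_j^τ. Then the τ–τ component of the Fisher information in score form satisfies ∫_{S_K} f(x) ( (K ∑_{l=1}^K (β_l/x_l^τ) log x_l)/k(x) − ∑_{j=1}^K log x_j + (K−1)/τ )² d^{K−1}x = [ (K−1)(K π²/6 + 1) + (1/2) ∑_{i=1}^K ∑_{j=1}^K (log β_i − log β_j)² ] / ((K+1) τ²). (The squared factor is the score function ∂ log f/∂τ; this is the coefficient of dτ² in the information metric of the Concrete distribution.) -/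

import Mathlib

open MeasureTheory Finset

noncomputable def fillMap (K : ℕ) (u : Fin (K - 1) → ℝ) : Fin K → ℝ :=
  fun i => if h : (i : ℕ) < K - 1 then u ⟨i, h⟩ else 1 - ∑ j, u j

/-- The `(K-1)`-dimensional Lebesgue measure on the probability simplex `S_K`. -/
noncomputable def simplexMeasure (K : ℕ) : Measure (Fin K → ℝ) :=
  Measure.map (fillMap K)
    (volume.restrict {u : Fin (K - 1) → ℝ | (∀ j, 0 ≤ u j) ∧ ∑ j, u j ≤ 1})

/-- The density of the Concrete distribution `C(β, τ)` on the simplex. -/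
noncomputable def concreteDensity (K : ℕ) (β : Fin K → ℝ) (τ : ℝ) (x : Fin K → ℝ) : ℝ :=
  (Nat.factorial (K - 1) : ℝ) * τ ^ (K - 1) * (∑ j, β j / x j ^ τ) ^ (-(K : ℝ)) *
    ∏ i, β i / x i ^ (τ + 1)

/-- `k(x) = ∑_j β_j/x_j^τ`. -/
noncomputable def kfun (K : ℕ) (β : Fin K → ℝ) (τ : ℝ) (x : Fin K → ℝ) : ℝ :=
  ∑ j, β j / x j ^ τ

noncomputable def cE {n : ℕ} (z : Fin n → ℝ) : Fin (n + 1) → ℝ := Fin.snoc (α := fun _ => ℝ) z 0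

noncomputable def cQ {n : ℕ} (z : Fin n → ℝ) : ℝ := ∑ j, Real.exp (cE z j)

noncomputable def cW {n : ℕ} (z : Fin n → ℝ) (i : Fin (n + 1)) : ℝ := Real.exp (cE z i) / cQ z

@[simp] lemma cE_castSucc {n : ℕ} (z : Fin n → ℝ) (i : Fin n) : cE z i.castSucc = z i := by
  simp [cE]

@[simp] lemma cE_last {n : ℕ} (z : Fin n → ℝ) : cE z (Fin.last n) = 0 := by
  simp [cE]

lemma cQ_eq {n : ℕ} (z : Fin n → ℝ) : cQ z = (∑ j, Real.exp (z j)) + 1 := by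
  simp [cQ, Fin.sum_univ_castSucc]

lemma cQ_pos {n : ℕ} (z : Fin n → ℝ) : 0 < cQ z := by
  rw [cQ_eq]; positivity

lemma cW_pos {n : ℕ} (z : Fin n → ℝ) (i : Fin (n + 1)) : 0 < cW z i :=
  div_pos (Real.exp_pos _) (cQ_pos z)

lemma cW_sum {n : ℕ} (z : Fin n → ℝ) : ∑ i, cW z i = 1 := by
  unfold cW
  rw [← Finset.sum_div]
  exact div_self (cQ_pos z).ne'

lemma gamma_line (a r : ℝ) (ha : 0 < a) (hr : 0 < r) :
    Integrable (fun z : ℝ => Real.exp (a * z) * Real.exp (-(r * Real.exp z))) ∧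
    ∫ z : ℝ, Real.exp (a * z) * Real.exp (-(r * Real.exp z)) = Real.Gamma a * r ^ (-a) := by
  have key : ∫ z : ℝ, Real.exp (a * z) * Real.exp (-(r * Real.exp z))
      = Real.Gamma a * r ^ (-a) := by
    have h := integral_image_eq_integral_abs_deriv_smul (s := Set.univ) (f := Real.exp)
      (f' := Real.exp) MeasurableSet.univ
      (fun x _ => (Real.hasDerivAt_exp x).hasDerivWithinAt) (Real.exp_injective.injOn)
      (fun x : ℝ => x ^ (a - 1) * Real.exp (-(r * x)))
    rw [Set.image_univ, Real.range_exp, Real.integral_rpow_mul_exp_neg_mul_Ioi ha hr] at h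
    rw [setIntegral_univ] at h
    rw [Real.rpow_neg hr.le, ← Real.inv_rpow hr.le, mul_comm, ← one_div, h]
    congr 1
    ext z
    have e1 : Real.exp (a * z) = Real.exp z * Real.exp z ^ (a - 1) := by
      rw [← Real.exp_mul, ← Real.exp_add]
      congr 1; ring
    rw [smul_eq_mul, abs_of_pos (Real.exp_pos z), ← mul_assoc, e1]
  refine ⟨?_, key⟩
  apply Integrable.of_integral_ne_zero
  rw [key]
  have := Real.Gamma_pos_of_pos ha
  positivity

lemma gamma_half (a r : ℝ) (ha : 0 < a) (hr : 0 < r) :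
    IntegrableOn (fun t : ℝ => t ^ (a - 1) * Real.exp (-(r * t))) (Set.Ioi 0) := by
  apply Integrable.of_integral_ne_zero
  rw [Real.integral_rpow_mul_exp_neg_mul_Ioi ha hr]
  have := Real.Gamma_pos_of_pos ha
  positivity

lemma dirichlet_aux {n : ℕ} (α : Fin (n + 1) → ℝ) (z : Fin n → ℝ) :
    ∏ i, cW z i ^ α i = (∏ i : Fin n, Real.exp (α i.castSucc * z i)) * (1 / cQ z) ^ (∑ i, α i) := by
  have h : ∀ i, cW z i ^ α i = Real.exp (α i * cE z i) * (1 / cQ z) ^ (α i) := by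
    intro i
    have hq := cQ_pos z
    rw [cW, div_eq_mul_one_div, Real.mul_rpow (Real.exp_pos _).le (by positivity), ← Real.exp_mul,
      mul_comm (cE z i)]
  simp_rw [h]
  rw [Finset.prod_mul_distrib, Real.rpow_sum_of_pos (by have := cQ_pos z; positivity)]
  congr 1
  simp [Fin.prod_univ_castSucc]

lemma dirichlet {n : ℕ} (α : Fin (n + 1) → ℝ) (hα : ∀ i, 0 < α i) :
    Integrable (fun z : Fin n → ℝ => ∏ i, cW z i ^ α i) ∧
    ∫ z : Fin n → ℝ, ∏ i, cW z i ^ α i = (∏ i, Real.Gamma (α i)) / Real.Gamma (∑ i, α i) := by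
  set A := ∑ i, α i with hA
  have hApos : 0 < A := Finset.sum_pos (fun i _ => hα i) Finset.univ_nonempty
  have hG : 0 < Real.Gamma A := Real.Gamma_pos_of_pos hApos
  set f : ℝ → (Fin n → ℝ) → ℝ := fun r z => (r ^ (A - 1) * Real.exp (-r)) *
    ∏ i : Fin n, (Real.exp (α i.castSucc * z i) * Real.exp (-(r * Real.exp (z i)))) with hf
  have hz : ∀ r, 0 < r → Integrable (f r) ∧
      ∫ z, f r z = (∏ i : Fin n, Real.Gamma (α i.castSucc)) *
        (r ^ (α (Fin.last n) - 1) * Real.exp (-(1 * r))) := by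
    intro r hr
    constructor
    · apply Integrable.const_mul
      exact Integrable.fintype_prod (f := fun (i : Fin n) (x : ℝ) =>
        Real.exp (α i.castSucc * x) * Real.exp (-(r * Real.exp x)))
        (fun i => (gamma_line _ r (hα _) hr).1)
    · rw [hf]
      simp only
      rw [integral_const_mul, integral_fintype_prod_volume_eq_prod (fun (i : Fin n) (x : ℝ) =>
        Real.exp (α i.castSucc * x) * Real.exp (-(r * Real.exp x)))]
      simp_rw [fun i : Fin n => (gamma_line _ r (hα i.castSucc) hr).2]
      rw [Finset.prod_mul_distrib, ← Real.rpow_sum_of_pos hr, Finset.sum_neg_distrib]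
      have : r ^ (A - 1) * r ^ (-∑ i : Fin n, α i.castSucc) = r ^ (α (Fin.last n) - 1) := by
        rw [← Real.rpow_add hr, hA, Fin.sum_univ_castSucc]
        congr 1; ring
      rw [← this, one_mul]; ring
  have hr : ∀ z, ∫ r in Set.Ioi (0 : ℝ), f r z = Real.Gamma A * ∏ i, cW z i ^ α i := by
    intro z
    have h1 : ∀ r, f r z = (∏ i : Fin n, Real.exp (α i.castSucc * z i)) *
        (r ^ (A - 1) * Real.exp (-(cQ z * r))) := by
      intro r
      have : Real.exp (-(cQ z * r)) = Real.exp (-r) * ∏ i : Fin n, Real.exp (-(r * Real.exp (z i))) := by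
        rw [← Real.exp_sum, ← Real.exp_add, cQ_eq, Finset.sum_neg_distrib, ← Finset.mul_sum]
        congr 1; ring
      rw [this, hf]
      simp only [Finset.prod_mul_distrib]
      ring
    simp_rw [h1]
    rw [integral_const_mul, Real.integral_rpow_mul_exp_neg_mul_Ioi hApos (cQ_pos z), dirichlet_aux]
    ring
  have hnn : ∀ r, 0 < r → ∀ z, 0 ≤ f r z := by
    intro r hr z; simp only [hf]; positivity
  have hint : Integrable (Function.uncurry f)
      ((volume.restrict (Set.Ioi (0 : ℝ))).prod (volume : Measure (Fin n → ℝ))) := by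
    rw [integrable_prod_iff]
    · constructor
      · filter_upwards [ae_restrict_mem measurableSet_Ioi] with r hr
        exact (hz r hr).1
      · have : Integrable (fun r : ℝ => (∏ i : Fin n, Real.Gamma (α i.castSucc)) *
            (r ^ (α (Fin.last n) - 1) * Real.exp (-(1 * r)))) (volume.restrict (Set.Ioi (0 : ℝ))) :=
          (gamma_half _ 1 (hα _) one_pos).const_mul _
        refine this.congr ?_
        filter_upwards [ae_restrict_mem measurableSet_Ioi] with r hr
        rw [← (hz r hr).2]
        congr 1
        ext z
        exact (Real.norm_of_nonneg (hnn r hr z)).symm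
    · apply Measurable.aestronglyMeasurable
      simp only [hf, Function.uncurry_def]
      fun_prop
  have hI := hint.integral_prod_right
  simp only [Function.uncurry_apply_pair] at hI
  simp_rw [hr] at hI
  have hI2 := hI.const_mul (Real.Gamma A)⁻¹
  simp_rw [inv_mul_cancel_left₀ hG.ne'] at hI2
  refine ⟨hI2, ?_⟩
  have hsw := integral_integral_swap hint
  simp_rw [hr] at hsw
  rw [integral_const_mul, setIntegral_congr_fun (g := fun r => (∏ i : Fin n, Real.Gamma (α i.castSucc)) *
        (r ^ (α (Fin.last n) - 1) * Real.exp (-(1 * r)))) measurableSet_Ioi (fun r hr => (hz r hr).2),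
        integral_const_mul, Real.integral_rpow_mul_exp_neg_mul_Ioi (hα _) one_pos] at hsw
  rw [eq_div_iff hG.ne', mul_comm, ← hsw, Fin.prod_univ_castSucc]
  simp

lemma prod_ite_two {n : ℕ} (i j : Fin (n + 1)) (f : Fin (n + 1) → ℝ) (a b : ℝ) :
    ∏ l, f l * ((if l = i then a else 1) * (if l = j then b else 1)) = (∏ l, f l) * a * b := by
  rw [Finset.prod_mul_distrib, Finset.prod_mul_distrib]
  simp [mul_assoc]

lemma dir_two {n : ℕ} {i j : Fin (n + 1)} (hij : i ≠ j) (s : ℝ) (h1 : -2 < s) (h2 : s < 2) :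
    Integrable (fun z : Fin n → ℝ => ((∏ l, cW z l) * cW z i * cW z j) *
      Real.exp (s * (cE z i - cE z j))) ∧
    ∫ z : Fin n → ℝ, ((∏ l, cW z l) * cW z i * cW z j) *
      Real.exp (s * (cE z i - cE z j)) =
      Real.Gamma (2 + s) * Real.Gamma (2 - s) / Nat.factorial (n + 2) := by
  set α : Fin (n + 1) → ℝ := fun l => 1 + ((if l = i then 1 + s else 0) + (if l = j then 1 - s else 0))
    with hα
  have hαpos : ∀ l, 0 < α l := by
    intro l
    simp only [hα]
    split_ifs with h h'
    · exact absurd (h.symm.trans h') hij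
    all_goals linarith
  have hW : ∀ z : Fin n → ℝ, ∏ l, cW z l ^ α l = ((∏ l, cW z l) * cW z i * cW z j) *
      Real.exp (s * (cE z i - cE z j)) := by
    intro z
    have e : ∀ l, cW z l ^ α l = cW z l * ((if l = i then cW z i ^ (1 + s) else 1) *
        (if l = j then cW z j ^ (1 - s) else 1)) := by
      intro l
      simp only [hα]
      rw [Real.rpow_add (cW_pos z l), Real.rpow_add (cW_pos z l), Real.rpow_one]
      congr 2
      · split_ifs with h
        · rw [h]
        · simp
      · split_ifs with h
        · rw [h]
        · simp
    simp_rw [e]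
    rw [prod_ite_two, Real.rpow_add (cW_pos z i), Real.rpow_one, Real.rpow_sub (cW_pos z j),
      Real.rpow_one]
    have hE : Real.exp (s * (cE z i - cE z j)) = cW z i ^ s / cW z j ^ s := by
      rw [← Real.div_rpow (cW_pos z i).le (cW_pos z j).le, cW, cW,
        div_div_div_cancel_right₀ (cQ_pos z).ne', ← Real.exp_sub, ← Real.exp_mul, mul_comm]
    rw [hE]
    ring
  have hG : ∏ l, Real.Gamma (α l) = Real.Gamma (2 + s) * Real.Gamma (2 - s) := by
    have e : ∀ l, Real.Gamma (α l) = 1 * ((if l = i then Real.Gamma (2 + s) else 1) *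
        (if l = j then Real.Gamma (2 - s) else 1)) := by
      intro l
      simp only [hα]
      split_ifs with h h'
      · exact absurd (h.symm.trans h') hij
      · simp; ring_nf
      · simp; ring_nf
      · simp
    simp_rw [e]
    rw [prod_ite_two]
    simp
  have hS : ∑ l, α l = ((n + 2 : ℕ) : ℝ) + 1 := by
    simp only [hα, Finset.sum_add_distrib]
    simp
    ring
  have := dirichlet α hαpos
  simp_rw [hW] at this
  rwa [hG, hS, Real.Gamma_nat_eq_factorial] at this

lemma gamma_refl (s : ℝ) (h1 : -1 < s) (h2 : s < 1) :
    Real.Gamma (2 + s) * Real.Gamma (2 - s) * Real.sin (Real.pi * s) =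
      Real.pi * (s - s ^ 3) := by
  rcases eq_or_ne s 0 with rfl | hs
  · simp
  have e1 : Real.Gamma (2 + s) = (1 + s) * (s * Real.Gamma s) := by
    rw [← Real.Gamma_add_one hs, show (2 : ℝ) + s = (s + 1) + 1 by ring,
      Real.Gamma_add_one (by linarith), add_comm]
  have e2 : Real.Gamma (2 - s) = (1 - s) * Real.Gamma (1 - s) := by
    rw [show (2 : ℝ) - s = (1 - s) + 1 by ring, Real.Gamma_add_one (by linarith)]
  have hsin : Real.sin (Real.pi * s) ≠ 0 := by
    have hpi := Real.pi_pos
    rcases lt_or_gt_of_ne hs with h | h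
    · apply ne_of_lt
      apply Real.sin_neg_of_neg_of_neg_pi_lt <;> nlinarith
    · apply ne_of_gt
      apply Real.sin_pos_of_pos_of_lt_pi <;> nlinarith
  have e3 := Real.Gamma_mul_Gamma_one_sub s
  rw [eq_div_iff hsin] at e3
  rw [e1, e2]
  linear_combination (1 + s) * s * (1 - s) * e3

lemma deriv_step {U : Set ℝ} (hU : IsOpen U) {f g f' g' : ℝ → ℝ}
    (h : ∀ s ∈ U, f s = g s) (hf : ∀ s ∈ U, HasDerivAt f (f' s) s)
    (hg : ∀ s ∈ U, HasDerivAt g (g' s) s) : ∀ s ∈ U, f' s = g' s := by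
  intro s hs
  have : f =ᶠ[nhds s] g := by
    filter_upwards [hU.mem_nhds hs] with t ht using h t ht
  exact ((hf s hs).congr_of_eventuallyEq this.symm).unique (hg s hs)

lemma deriv_three {U : Set ℝ} (hU : IsOpen U) (h0 : (0 : ℝ) ∈ U) (F0 F1 F2 F3 : ℝ → ℝ) (C : ℝ)
    (d0 : ∀ s ∈ U, HasDerivAt F0 (F1 s) s) (d1 : ∀ s ∈ U, HasDerivAt F1 (F2 s) s)
    (d2 : ∀ s ∈ U, HasDerivAt F2 (F3 s) s)
    (h : ∀ s ∈ U, F0 s * Real.sin (Real.pi * s) = C * (Real.pi * (s - s ^ 3))) :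
    F0 0 = C ∧ F1 0 = 0 ∧ F2 0 = C * (Real.pi ^ 2 / 3 - 2) := by
  have hsin : ∀ s : ℝ, HasDerivAt (fun s => Real.sin (Real.pi * s))
      (Real.pi * Real.cos (Real.pi * s)) s := by
    intro s
    have := ((hasDerivAt_id s).const_mul Real.pi).sin
    simpa [mul_comm] using this
  have hcos : ∀ s : ℝ, HasDerivAt (fun s => Real.cos (Real.pi * s))
      (-Real.pi * Real.sin (Real.pi * s)) s := by
    intro s
    have := ((hasDerivAt_id s).const_mul Real.pi).cos
    simpa [mul_comm] using this
  have hR0 : ∀ s : ℝ, HasDerivAt (fun s : ℝ => C * (Real.pi * (s - s ^ 3)))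
      (C * (Real.pi * (1 - 3 * s ^ 2))) s := by
    intro s
    have := (((hasDerivAt_id s).sub ((hasDerivAt_pow 3 s))).const_mul Real.pi).const_mul C
    simpa using this
  have hR1 : ∀ s : ℝ, HasDerivAt (fun s : ℝ => C * (Real.pi * (1 - 3 * s ^ 2)))
      (C * (Real.pi * (-6 * s))) s := by
    intro s
    have := ((((hasDerivAt_pow 2 s).const_mul 3).const_sub 1).const_mul Real.pi).const_mul C
    refine this.congr_deriv ?_
    rw [show (2 : ℕ) - 1 = 1 from rfl]
    push_cast
    ring
  have hR2 : ∀ s : ℝ, HasDerivAt (fun s : ℝ => C * (Real.pi * (-6 * s)))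
      (C * (Real.pi * (-6))) s := by
    intro s
    have := (((hasDerivAt_id s).const_mul (-6)).const_mul Real.pi).const_mul C
    refine this.congr_deriv ?_
    simp
  have k1 := deriv_step hU h (fun s hs => (d0 s hs).mul (hsin s)) (fun s _ => hR0 s)
  have k2 := deriv_step hU k1 (fun s hs => ((d1 s hs).mul (hsin s)).add
    ((d0 s hs).mul ((hcos s).const_mul Real.pi))) (fun s _ => hR1 s)
  have k3 := deriv_step hU k2 (fun s hs => (((d2 s hs).mul (hsin s)).add
    ((d1 s hs).mul ((hcos s).const_mul Real.pi))).add
    (((d1 s hs).mul ((hcos s).const_mul Real.pi)).add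
    ((d0 s hs).mul (((hsin s).const_mul (-Real.pi)).const_mul Real.pi)))) (fun s _ => hR2 s)
  have l1 := k1 0 h0
  have l2 := k2 0 h0
  have l3 := k3 0 h0
  simp at l1 l2 l3
  have hpi := Real.pi_pos
  refine ⟨l1, l2, ?_⟩
  rw [l1] at l3
  apply mul_right_cancel₀ hpi.ne'
  linear_combination l3 / 3

lemma cE_continuous {n : ℕ} (i : Fin (n + 1)) : Continuous (fun z : Fin n → ℝ => cE z i) := by
  refine Fin.lastCases ?_ (fun i => ?_) i
  · simpa using continuous_const
  · simpa using continuous_apply i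

@[fun_prop] lemma cE_measurable {n : ℕ} (i : Fin (n + 1)) :
    Measurable (fun z : Fin n → ℝ => cE z i) := (cE_continuous i).measurable

lemma cQ_continuous {n : ℕ} : Continuous (fun z : Fin n → ℝ => cQ z) := by
  unfold cQ
  exact continuous_finsetSum _ (fun i _ => (cE_continuous i).rexp)

lemma cW_continuous {n : ℕ} (i : Fin (n + 1)) : Continuous (fun z : Fin n → ℝ => cW z i) := by
  unfold cW
  exact ((cE_continuous i).rexp).div cQ_continuous (fun z => (cQ_pos z).ne')

@[fun_prop] lemma cW_measurable {n : ℕ} (i : Fin (n + 1)) :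
    Measurable (fun z : Fin n → ℝ => cW z i) := (cW_continuous i).measurable

open ProbabilityTheory in
lemma moments {n : ℕ} {i j : Fin (n + 1)} (hij : i ≠ j) :
    (∀ k : ℕ, Integrable (fun z : Fin n → ℝ => ((∏ l, cW z l) * cW z i * cW z j) *
      (cE z i - cE z j) ^ k)) ∧
    ∫ z : Fin n → ℝ, ((∏ l, cW z l) * cW z i * cW z j) = 1 / Nat.factorial (n + 2) ∧
    ∫ z : Fin n → ℝ, ((∏ l, cW z l) * cW z i * cW z j) * (cE z i - cE z j) = 0 ∧
    ∫ z : Fin n → ℝ, ((∏ l, cW z l) * cW z i * cW z j) * (cE z i - cE z j) ^ 2 =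
      1 / Nat.factorial (n + 2) * (Real.pi ^ 2 / 3 - 2) := by
  set ρ : (Fin n → ℝ) → ℝ := fun z => (∏ l, cW z l) * cW z i * cW z j with hρ
  have hρpos : ∀ z, 0 ≤ ρ z := fun z =>
    (mul_pos (mul_pos (Finset.prod_pos (fun l _ => cW_pos z l)) (cW_pos z i)) (cW_pos z j)).le
  have hρm : Measurable ρ := by
    simp only [hρ]; fun_prop
  set μ : Measure (Fin n → ℝ) := volume.withDensity (fun z => ENNReal.ofReal (ρ z)) with hμ
  have hInt : ∀ g : (Fin n → ℝ) → ℝ, ∫ z, g z ∂μ = ∫ z, ρ z * g z := by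
    intro g
    rw [hμ, integral_withDensity_eq_integral_toReal_smul (by fun_prop) (by simp)]
    simp only [ENNReal.toReal_ofReal (hρpos _), smul_eq_mul]
  have hInte : ∀ g : (Fin n → ℝ) → ℝ, Integrable g μ ↔ Integrable (fun z => ρ z * g z) := by
    intro g
    rw [hμ, integrable_withDensity_iff_integrable_smul' (by fun_prop) (by simp)]
    simp only [ENNReal.toReal_ofReal (hρpos _), smul_eq_mul]
  set X : (Fin n → ℝ) → ℝ := fun z => cE z i - cE z j with hX
  have hU : Set.Ioo (-1 : ℝ) 1 ⊆ interior (integrableExpSet X μ) := by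
    apply interior_maximal _ isOpen_Ioo
    intro s hs
    have := (dir_two hij s (by linarith [hs.1]) (by linarith [hs.2])).1
    exact (hInte _).2 this
  have hmgf : ∀ s ∈ Set.Ioo (-1 : ℝ) 1, mgf X μ s * Real.sin (Real.pi * s) =
      1 / Nat.factorial (n + 2) * (Real.pi * (s - s ^ 3)) := by
    intro s hs
    rw [mgf, hInt, (dir_two hij s (by linarith [hs.1]) (by linarith [hs.2])).2,
      ← gamma_refl s hs.1 hs.2]
    ring
  have h0 : (0 : ℝ) ∈ Set.Ioo (-1 : ℝ) 1 := by norm_num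
  have hd : ∀ k, ∀ s ∈ Set.Ioo (-1 : ℝ) 1, HasDerivAt (iteratedDeriv k (mgf X μ))
      (iteratedDeriv (k + 1) (mgf X μ) s) s := by
    intro k s hs
    rw [iteratedDeriv_mgf (hU hs)]
    exact hasDerivAt_iteratedDeriv_mgf (hU hs) k
  have := deriv_three isOpen_Ioo h0 (iteratedDeriv 0 (mgf X μ)) (iteratedDeriv 1 (mgf X μ))
    (iteratedDeriv 2 (mgf X μ)) (iteratedDeriv 3 (mgf X μ)) (1 / Nat.factorial (n + 2))
    (hd 0) (hd 1) (hd 2) (by simpa using hmgf)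
  rw [iteratedDeriv_mgf_zero (hU h0), iteratedDeriv_mgf_zero (hU h0),
    iteratedDeriv_mgf_zero (hU h0), hInt, hInt, hInt] at this
  refine ⟨fun k => ?_, ?_⟩
  · exact (hInte _).1 (integrable_pow_of_mem_interior_integrableExpSet (hU h0) k)
  · simpa using this

noncomputable def cP {n : ℕ} (z : Fin n → ℝ) : ℝ := ∏ l, cW z l

lemma cP_pos {n : ℕ} (z : Fin n → ℝ) : 0 < cP z := Finset.prod_pos (fun l _ => cW_pos z l)

lemma cW_le_one {n : ℕ} (z : Fin n → ℝ) (i : Fin (n + 1)) : cW z i ≤ 1 := by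
  rw [← cW_sum z]
  exact Finset.single_le_sum (f := cW z) (fun j _ => (cW_pos z j).le) (Finset.mem_univ i)

lemma cP_le_cW {n : ℕ} (z : Fin n → ℝ) (i : Fin (n + 1)) : cP z ≤ cW z i := by
  rw [cP, ← Finset.mul_prod_erase _ _ (Finset.mem_univ i)]
  apply mul_le_of_le_one_right (cW_pos z i).le
  exact Finset.prod_le_one (fun j _ => (cW_pos z j).le) (fun j _ => cW_le_one z j)

lemma cP_le_exp {n : ℕ} (z : Fin n → ℝ) : cP z ≤ Real.exp (-‖z‖) := by
  rw [← Real.log_le_iff_le_exp (cP_pos z), le_neg]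
  have key : ∀ i, |z i| ≤ - Real.log (cP z) := by
    intro i
    rw [abs_le', le_neg, neg_le_neg_iff, Real.log_le_iff_le_exp (cP_pos z),
      Real.log_le_iff_le_exp (cP_pos z)]
    have hq : Real.exp (z i) ≤ cQ z := by
      have := Finset.single_le_sum (f := fun j => Real.exp (cE z j))
        (fun j _ => (Real.exp_pos _).le) (Finset.mem_univ i.castSucc)
      simpa [cQ] using this
    have hq1 : 1 ≤ cQ z := by
      rw [cQ_eq]
      have : 0 ≤ ∑ j, Real.exp (z j) := by positivity
      linarith
    constructor
    · refine (cP_le_cW z (Fin.last n)).trans ?_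
      rw [cW, cE_last, Real.exp_zero, Real.exp_neg, one_div]
      exact inv_anti₀ (Real.exp_pos _) hq
    · refine (cP_le_cW z i.castSucc).trans ?_
      rw [cW, cE_castSucc]
      exact div_le_self (Real.exp_pos _).le hq1
  have h0 : 0 ≤ - Real.log (cP z) := by
    have := Real.log_nonpos (cP_pos z).le ((cP_le_cW z (Fin.last n)).trans (cW_le_one z _))
    linarith
  rw [pi_norm_le_iff_of_nonneg h0]
  exact key

/-- Continuous functions of polynomial growth. -/
def PG {n : ℕ} (f : (Fin n → ℝ) → ℝ) : Prop :=
  Continuous f ∧ ∃ (M : ℝ) (k : ℕ), ∀ z, |f z| ≤ M * (1 + ‖z‖) ^ k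

lemma cP_continuous {n : ℕ} : Continuous (fun z : Fin n → ℝ => cP z) := by
  unfold cP
  exact continuous_finsetProd _ (fun i _ => cW_continuous i)

lemma PG.integrable {n : ℕ} {f : (Fin n → ℝ) → ℝ} (hf : PG f) :
    Integrable (fun z => cP z * f z) := by
  obtain ⟨hc, M, k, hM⟩ := hf
  have h1 : Integrable (fun z : Fin n → ℝ => (M * (Nat.factorial (n + 1 + k) * Real.exp 1)) *
      (1 + ‖z‖) ^ (-((n : ℝ) + 1))) := by
    apply Integrable.const_mul
    apply integrable_one_add_norm
    simp
  refine h1.mono' (cP_continuous.mul hc).aestronglyMeasurable (Filter.Eventually.of_forall ?_)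
  intro z
  have ht : 0 < 1 + ‖z‖ := by positivity
  have hM0 : 0 ≤ M := by
    have := (abs_nonneg _).trans (hM 0)
    simpa using this
  rw [norm_mul, Real.norm_of_nonneg (cP_pos z).le, Real.norm_eq_abs]
  have hfac := Real.pow_div_factorial_le_exp (1 + ‖z‖) ht.le (n + 1 + k)
  rw [div_le_iff₀ (by positivity)] at hfac
  have e1 : (1 + ‖z‖) ^ (-((n : ℝ) + 1)) = ((1 + ‖z‖) ^ (n + 1))⁻¹ := by
    rw [Real.rpow_neg ht.le, ← Nat.cast_succ, Real.rpow_natCast]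
  rw [e1]
  calc cP z * |f z| ≤ Real.exp (-‖z‖) * (M * (1 + ‖z‖) ^ k) :=
        mul_le_mul (cP_le_exp z) (hM z) (abs_nonneg _) (Real.exp_pos _).le
    _ = M * (Real.exp (-‖z‖) * ((1 + ‖z‖) ^ (n + 1 + k))) * ((1 + ‖z‖) ^ (n + 1))⁻¹ := by
        rw [pow_add]; field_simp
    _ ≤ M * (Real.exp (-‖z‖) * (Real.exp (1 + ‖z‖) * Nat.factorial (n + 1 + k))) *
          ((1 + ‖z‖) ^ (n + 1))⁻¹ := by gcongr
    _ = _ := by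
        rw [Real.exp_add, Real.exp_neg]
        have := Real.exp_pos ‖z‖
        field_simp

lemma PG.const {n : ℕ} (a : ℝ) : PG (fun _ : Fin n → ℝ => a) :=
  ⟨continuous_const, |a|, 0, fun z => by simp⟩

lemma PG.add {n : ℕ} {f g : (Fin n → ℝ) → ℝ} (hf : PG f) (hg : PG g) : PG (fun z => f z + g z) := by
  obtain ⟨hc, M, k, hM⟩ := hf
  obtain ⟨hc', M', k', hM'⟩ := hg
  refine ⟨hc.add hc', |M| + |M'|, k + k', fun z => ?_⟩
  have ht : 1 ≤ 1 + ‖z‖ := by simp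
  have a1 : (1 + ‖z‖) ^ k ≤ (1 + ‖z‖) ^ (k + k') := pow_le_pow_right₀ ht (by omega)
  have a2 : (1 + ‖z‖) ^ k' ≤ (1 + ‖z‖) ^ (k + k') := pow_le_pow_right₀ ht (by omega)
  calc |f z + g z| ≤ |f z| + |g z| := abs_add_le _ _
    _ ≤ M * (1 + ‖z‖) ^ k + M' * (1 + ‖z‖) ^ k' := add_le_add (hM z) (hM' z)
    _ ≤ |M| * (1 + ‖z‖) ^ (k + k') + |M'| * (1 + ‖z‖) ^ (k + k') := by
        gcongr
        · exact le_abs_self M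
        · exact le_abs_self M'
    _ = _ := by ring

lemma PG.mul {n : ℕ} {f g : (Fin n → ℝ) → ℝ} (hf : PG f) (hg : PG g) : PG (fun z => f z * g z) := by
  obtain ⟨hc, M, k, hM⟩ := hf
  obtain ⟨hc', M', k', hM'⟩ := hg
  refine ⟨hc.mul hc', M * M', k + k', fun z => ?_⟩
  rw [abs_mul]
  calc |f z| * |g z| ≤ (M * (1 + ‖z‖) ^ k) * (M' * (1 + ‖z‖) ^ k') :=
        mul_le_mul (hM z) (hM' z) (abs_nonneg _) ((abs_nonneg _).trans (hM z))
    _ = _ := by ring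

lemma PG.sub {n : ℕ} {f g : (Fin n → ℝ) → ℝ} (hf : PG f) (hg : PG g) : PG (fun z => f z - g z) := by
  have := hf.add ((PG.const (-1)).mul hg)
  convert this using 2
  ring

lemma PG.sum {n : ℕ} {ι : Type*} (s : Finset ι) {f : ι → (Fin n → ℝ) → ℝ} (hf : ∀ i, PG (f i)) :
    PG (fun z => ∑ i ∈ s, f i z) := by
  classical
  induction s using Finset.induction_on with
  | empty => simpa using PG.const 0
  | insert a s ha ih =>
    simp_rw [Finset.sum_insert ha]
    exact (hf a).add ih

lemma PG.pow2 {n : ℕ} {f : (Fin n → ℝ) → ℝ} (hf : PG f) : PG (fun z => f z ^ 2) := by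
  simp_rw [sq]; exact hf.mul hf

lemma PG.W {n : ℕ} (i : Fin (n + 1)) : PG (fun z : Fin n → ℝ => cW z i) :=
  ⟨cW_continuous i, 1, 0, fun z => by
    rw [abs_of_pos (cW_pos z i)]; simpa using cW_le_one z i⟩

lemma PG.coord {n : ℕ} (i : Fin n) : PG (fun z : Fin n → ℝ => z i) :=
  ⟨continuous_apply i, 1, 1, fun z => by
    have := norm_le_pi_norm z i
    rw [Real.norm_eq_abs] at this
    linarith⟩

lemma PG.E {n : ℕ} (i : Fin (n + 1)) : PG (fun z : Fin n → ℝ => cE z i) := by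
  refine Fin.lastCases ?_ (fun i => ?_) i
  · simpa using PG.const 0
  · simpa using PG.coord i

lemma cE_add {n : ℕ} (z y : Fin n → ℝ) (i : Fin (n + 1)) : cE (z + y) i = cE z i + cE y i := by
  refine Fin.lastCases ?_ (fun i => ?_) i <;> simp

lemma cE_smul {n : ℕ} (a : ℝ) (y : Fin n → ℝ) (i : Fin (n + 1)) : cE (a • y) i = a * cE y i := by
  refine Fin.lastCases ?_ (fun i => ?_) i <;> simp

lemma cE_sub {n : ℕ} (z y : Fin n → ℝ) (i : Fin (n + 1)) : cE (z - y) i = cE z i - cE y i := by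
  refine Fin.lastCases ?_ (fun i => ?_) i <;> simp

noncomputable def cEL {n : ℕ} (i : Fin (n + 1)) : (Fin n → ℝ) →L[ℝ] ℝ :=
  LinearMap.toContinuousLinearMap
    { toFun := fun z => cE z i
      map_add' := fun z y => cE_add z y i
      map_smul' := fun a y => cE_smul a y i }

@[simp] lemma cEL_apply {n : ℕ} (i : Fin (n + 1)) (z : Fin n → ℝ) : cEL i z = cE z i := rfl

lemma cE_hasFDerivAt {n : ℕ} (i : Fin (n + 1)) (z : Fin n → ℝ) :
    HasFDerivAt (fun z => cE z i) (cEL i) z := (cEL (n := n) i).hasFDerivAt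

noncomputable def cWL {n : ℕ} (z : Fin n → ℝ) (i : Fin (n + 1)) : (Fin n → ℝ) →L[ℝ] ℝ :=
  cW z i • (cEL i - ∑ j, cW z j • cEL j)

lemma cWL_apply {n : ℕ} (z : Fin n → ℝ) (i : Fin (n + 1)) (v : Fin n → ℝ) :
    cWL z i v = cW z i * (cE v i - ∑ j, cW z j * cE v j) := by
  simp [cWL]

lemma cW_hasFDerivAt {n : ℕ} (i : Fin (n + 1)) (z : Fin n → ℝ) :
    HasFDerivAt (fun z => cW z i) (cWL z i) z := by
  have hQ : HasFDerivAt (fun z : Fin n → ℝ => cQ z) (∑ j, Real.exp (cE z j) • cEL j) z := by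
    unfold cQ
    exact HasFDerivAt.fun_sum (fun j _ => (cE_hasFDerivAt j z).exp)
  have hL : HasFDerivAt (fun z : Fin n → ℝ => Real.log (cQ z)) _ z := hQ.log (cQ_pos z).ne'
  have h := ((cE_hasFDerivAt i z).sub hL).exp
  have e : ∀ z : Fin n → ℝ, Real.exp (cE z i - Real.log (cQ z)) = cW z i := by
    intro z
    rw [Real.exp_sub, Real.exp_log (cQ_pos z), cW]
  simp only [Pi.sub_apply, e] at h
  refine h.congr_fderiv ?_
  rw [cWL, Finset.smul_sum]
  congr 2
  refine Finset.sum_congr rfl fun j _ => ?_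
  rw [smul_smul, cW]
  congr 1
  ring

lemma cP_hasFDerivAt {n : ℕ} (z : Fin n → ℝ) :
    HasFDerivAt (fun z : Fin n → ℝ => cP z)
      (cP z • (∑ i, cEL i - ((n : ℝ) + 1) • ∑ j, cW z j • cEL j)) z := by
  unfold cP
  refine (HasFDerivAt.finsetProd (fun i _ => cW_hasFDerivAt i z)).congr_fderiv ?_
  have : ∀ i ∈ Finset.univ, (∏ j ∈ Finset.univ.erase i, cW z j) • cWL z i =
      (∏ l, cW z l) • (cEL i - ∑ j, cW z j • cEL j) := by
    intro i hi
    rw [cWL, smul_smul, Finset.prod_erase_mul _ _ hi]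
  rw [Finset.sum_congr rfl this, ← Finset.smul_sum, Finset.sum_sub_distrib]
  congr 2
  simp [← Nat.cast_smul_eq_nsmul ℝ]

noncomputable def cPhi {n : ℕ} (c z : Fin n → ℝ) : ℝ :=
  ∑ l, (((n : ℝ) + 1) * cW z l - 1) * cE (c - z) l + n

lemma cE_single {n : ℕ} (u : Fin (n + 1) → ℝ) (l : Fin n) :
    ∑ j, u j * cE (Pi.single l 1) j = u l.castSucc := by
  rw [Fin.sum_univ_castSucc]
  simp [Pi.single_apply]

lemma ibp {n : ℕ} (c : Fin n → ℝ) (Ψ : (Fin n → ℝ) → ℝ) (Ψ' : (Fin n → ℝ) → (Fin n → ℝ) →L[ℝ] ℝ)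
    (hΨ : ∀ z, HasFDerivAt Ψ (Ψ' z) z) (hg : PG Ψ) (hg' : ∀ v, PG (fun z => Ψ' z v)) :
    ∫ z, cP z * (cPhi c z * Ψ z) = ∫ z, cP z * Ψ' z (c - z) := by
  have hcz : ∀ l, PG (fun z : Fin n → ℝ => c l - z l) := fun l => (PG.const _).sub (PG.coord l)
  have hK : ∀ l : Fin n, PG (fun z : Fin n → ℝ => ((1 - ((n : ℝ) + 1) * cW z l.castSucc) * (c l - z l) - 1)) :=
    fun l => (((PG.const _).sub ((PG.const _).mul (PG.W _))).mul (hcz l)).sub (PG.const _)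
  have hf : ∀ (l : Fin n) (z : Fin n → ℝ), HasFDerivAt (fun z : Fin n → ℝ => cP z * (c l - z l))
      (cP z • (-ContinuousLinearMap.proj l) + (c l - z l) •
        (cP z • (∑ i, cEL i - ((n : ℝ) + 1) • ∑ j, cW z j • cEL j))) z := by
    intro l z
    exact (cP_hasFDerivAt z).mul ((hasFDerivAt_apply l z).const_sub (c l))
  have hfe : ∀ (l : Fin n) (z : Fin n → ℝ), fderiv ℝ (fun z : Fin n → ℝ => cP z * (c l - z l)) z
      (Pi.single l 1) = cP z * ((1 - ((n : ℝ) + 1) * cW z l.castSucc) * (c l - z l) - 1) := by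
    intro l z
    rw [(hf l z).fderiv]
    have h1 := cE_single (fun _ => (1 : ℝ)) l
    have h2 := cE_single (cW z) l
    simp only [one_mul] at h1
    simp [h1, h2]
    ring
  have step : ∀ l : Fin n, ∫ z, cP z * ((c l - z l) * Ψ' z (Pi.single l 1)) =
      - ∫ z, cP z * (((1 - ((n : ℝ) + 1) * cW z l.castSucc) * (c l - z l) - 1) * Ψ z) := by
    intro l
    have := integral_mul_fderiv_eq_neg_fderiv_mul_of_integrable (μ := volume)
      (f := fun z : Fin n → ℝ => cP z * (c l - z l)) (g := Ψ) (v := Pi.single l 1)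
      (by simp_rw [hfe, mul_assoc]; exact ((hK l).mul hg).integrable)
      (by simp_rw [(hΨ _).fderiv, mul_assoc]; exact ((hcz l).mul (hg' _)).integrable)
      (by simp_rw [mul_assoc]; exact ((hcz l).mul hg).integrable)
      (fun z _ => (hf l z).differentiableAt) (fun z _ => (hΨ z).differentiableAt)
    simp_rw [hfe, (hΨ _).fderiv, mul_assoc] at this
    exact this
  have s2 : ∀ z, cP z * Ψ' z (c - z) = ∑ l, cP z * ((c l - z l) * Ψ' z (Pi.single l 1)) := by
    intro z
    rw [← Finset.mul_sum]
    congr 1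
    conv_lhs => rw [pi_eq_sum_univ' (c - z)]
    simp only [map_sum, map_smul, smul_eq_mul, Pi.sub_apply]
  have s1 : ∀ z, cP z * (cPhi c z * Ψ z) = ∑ l : Fin n,
      -(cP z * (((1 - ((n : ℝ) + 1) * cW z l.castSucc) * (c l - z l) - 1) * Ψ z)) := by
    intro z
    rw [Finset.sum_neg_distrib, ← Finset.mul_sum, ← Finset.sum_mul, cPhi, Fin.sum_univ_castSucc,
      Finset.sum_sub_distrib]
    have : ∑ l : Fin n, (1 - ((n : ℝ) + 1) * cW z l.castSucc) * (c l - z l) =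
      - ∑ l : Fin n, (((n : ℝ) + 1) * cW z l.castSucc - 1) * (c l - z l) := by
      rw [← Finset.sum_neg_distrib]
      exact Finset.sum_congr rfl fun l _ => by ring
    rw [this]
    simp
    ring
  simp_rw [s1, s2]
  rw [integral_finsetSum, integral_finsetSum]
  · refine Finset.sum_congr rfl fun l _ => ?_
    rw [integral_neg, step]
  · intro l _; exact ((hcz l).mul (hg' _)).integrable
  · intro l _; exact (((hK l).mul hg).integrable).neg

lemma int_comb {n : ℕ} {f g h : (Fin n → ℝ) → ℝ} (hf : Integrable f) (hg : Integrable g)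
    (hh : Integrable h) (a b d : ℝ) :
    ∫ z, (a * f z - b * g z + d * h z) = a * (∫ z, f z) - b * (∫ z, g z) + d * ∫ z, h z := by
  have h1 : Integrable (fun z => a * f z - b * g z) := (hf.const_mul a).sub (hg.const_mul b)
  rw [integral_add h1 (hh.const_mul d), integral_sub (hf.const_mul a) (hg.const_mul b),
    integral_const_mul, integral_const_mul, integral_const_mul]

lemma cP_integral {n : ℕ} : ∫ z : Fin n → ℝ, cP z = 1 / Nat.factorial n := by
  have := (dirichlet (n := n) (fun _ => 1) (fun _ => one_pos)).2
  simp only [Real.rpow_one, Real.Gamma_one, Finset.prod_const_one, Finset.sum_const,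
    Finset.card_univ, Fintype.card_fin, nsmul_eq_mul, mul_one] at this
  rw [Nat.cast_succ, Real.Gamma_nat_eq_factorial] at this
  exact this

lemma PG.a {n : ℕ} (c : Fin n → ℝ) (l : Fin (n + 1)) : PG (fun z : Fin n → ℝ => cE (c - z) l) := by
  simp_rw [cE_sub]
  exact (PG.const _).sub (PG.E l)

lemma PG.Phi {n : ℕ} (c : Fin n → ℝ) : PG (fun z : Fin n → ℝ => cPhi c z) := by
  unfold cPhi
  exact (PG.sum _ fun l => (((PG.const _).mul (PG.W l)).sub (PG.const _)).mul (PG.a c l)).add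
    (PG.const _)

noncomputable def cPhiL {n : ℕ} (c z : Fin n → ℝ) : (Fin n → ℝ) →L[ℝ] ℝ :=
  ∑ l, ((((n : ℝ) + 1) * cW z l - 1) • (-cEL l) + cE (c - z) l • (((n : ℝ) + 1) • cWL z l))

lemma cPhi_hasFDerivAt {n : ℕ} (c z : Fin n → ℝ) :
    HasFDerivAt (fun z => cPhi c z) (cPhiL c z) z := by
  unfold cPhi cPhiL
  apply HasFDerivAt.add_const
  apply HasFDerivAt.fun_sum
  intro l _
  apply HasFDerivAt.mul
  · exact ((cW_hasFDerivAt l z).const_mul _).sub_const _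
  · simp_rw [cE_sub]
    exact (cE_hasFDerivAt l z).const_sub _

lemma cPhiL_apply {n : ℕ} (c z v : Fin n → ℝ) : cPhiL c z v =
    ∑ l, ((((n : ℝ) + 1) * cW z l - 1) * (-cE v l) + cE (c - z) l * (((n : ℝ) + 1) *
      (cW z l * (cE v l - ∑ j, cW z j * cE v j)))) := by
  simp [cPhiL, cWL_apply]

lemma var_pair {m : ℕ} (w a : Fin m → ℝ) (hw : ∑ i, w i = 1) :
    ∑ i, ∑ j, w i * w j * (a i - a j) ^ 2 =
      2 * (∑ i, w i * a i ^ 2 - (∑ i, w i * a i) ^ 2) := by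
  have e : ∀ i j, w i * w j * (a i - a j) ^ 2 =
      (w i * a i ^ 2) * w j + w i * (w j * a j ^ 2) - 2 * ((w i * a i) * (w j * a j)) := by
    intro i j; ring
  simp_rw [e, Finset.sum_sub_distrib, Finset.sum_add_distrib, ← Finset.mul_sum,
    ← Finset.sum_mul, hw]
  ring

lemma cPhiL_diag {n : ℕ} (c z : Fin n → ℝ) : cPhiL c z (c - z) =
    ((n : ℝ) + 1) / 2 * ∑ i, ∑ j, cW z i * cW z j * (cE (c - z) i - cE (c - z) j) ^ 2
      - cPhi c z + n := by
  rw [var_pair _ _ (cW_sum z), cPhiL_apply, cPhi]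
  have e : ∀ l, ((((n : ℝ) + 1) * cW z l - 1) * (-cE (c - z) l) + cE (c - z) l * (((n : ℝ) + 1) *
      (cW z l * (cE (c - z) l - ∑ j, cW z j * cE (c - z) j)))) =
      -((((n : ℝ) + 1) * cW z l - 1) * (cE (c - z) l)) + ((n : ℝ) + 1) * (cW z l * cE (c - z) l ^ 2)
       - (((n : ℝ) + 1) * ∑ j, cW z j * cE (c - z) j) * (cW z l * cE (c - z) l) := by
    intro l; ring
  simp_rw [e]
  rw [Finset.sum_sub_distrib, Finset.sum_add_distrib, Finset.sum_neg_distrib, ← Finset.mul_sum,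
    ← Finset.mul_sum]
  ring

lemma pair_int {n : ℕ} (c : Fin n → ℝ) (i j : Fin (n + 1)) :
    ∫ z : Fin n → ℝ, cP z * (cW z i * cW z j * (cE (c - z) i - cE (c - z) j) ^ 2) =
      1 / Nat.factorial (n + 2) * ((cE c i - cE c j) ^ 2 +
        if i = j then 0 else (Real.pi ^ 2 / 3 - 2)) := by
  split_ifs with h
  · subst h; simp
  obtain ⟨hI, h0, h1, h2⟩ := moments h
  set d := cE c i - cE c j with hd
  have e : ∀ z : Fin n → ℝ, cP z * (cW z i * cW z j * (cE (c - z) i - cE (c - z) j) ^ 2) =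
      d ^ 2 * ((∏ l, cW z l) * cW z i * cW z j) -
      2 * d * (((∏ l, cW z l) * cW z i * cW z j) * (cE z i - cE z j)) +
      ((∏ l, cW z l) * cW z i * cW z j) * (cE z i - cE z j) ^ 2 := by
    intro z
    rw [cE_sub, cE_sub, hd, cP]
    ring
  simp_rw [e]
  have i0 := hI 0
  have i1 := hI 1
  simp only [pow_zero, mul_one, pow_one] at i0 i1
  have hc := int_comb i0 i1 (hI 2) (d ^ 2) (2 * d) 1
  simp only [one_mul] at hc
  rw [hc, h0, h1, h2]
  ring

lemma phi_sq {n : ℕ} (c : Fin n → ℝ) :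
    ∫ z, cP z * cPhi c z ^ 2 = 1 / Nat.factorial n *
      ((n * (((n : ℝ) + 1) * Real.pi ^ 2 / 6 + 1) +
        (1 / 2) * ∑ i, ∑ j, (cE c i - cE c j) ^ 2) / ((n : ℝ) + 2)) := by
  have h1 : ∫ z, cP z * cPhi c z = 0 := by
    have := ibp c (fun _ => 1) (fun _ => 0) (fun z => hasFDerivAt_const _ _) (PG.const _)
      (fun v => by simpa using PG.const 0)
    simpa using this
  have h2 := ibp c (cPhi c) (cPhiL c) (cPhi_hasFDerivAt c) (PG.Phi c) (fun v => by
    simp_rw [cPhiL_apply]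
    exact PG.sum _ fun l => ((((PG.const _).mul (PG.W l)).sub (PG.const _)).mul (PG.const _)).add
      ((PG.a c l).mul ((PG.const _).mul ((PG.W l).mul ((PG.const _).sub
        (PG.sum _ fun j => (PG.W j).mul (PG.const _)))))))
  have hp : ∀ i j, PG (fun z : Fin n → ℝ => cW z i * cW z j * (cE (c - z) i - cE (c - z) j) ^ 2) :=
    fun i j => ((PG.W i).mul (PG.W j)).mul ((PG.a c i).sub (PG.a c j)).pow2
  simp_rw [← sq, cPhiL_diag] at h2
  rw [h2]
  have e : ∀ z : Fin n → ℝ, cP z * (((n : ℝ) + 1) / 2 *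
      ∑ i, ∑ j, cW z i * cW z j * (cE (c - z) i - cE (c - z) j) ^ 2 - cPhi c z + n) =
      ((n : ℝ) + 1) / 2 * (∑ i, ∑ j, cP z * (cW z i * cW z j * (cE (c - z) i - cE (c - z) j) ^ 2))
       - cP z * cPhi c z + n * cP z := by
    intro z
    simp_rw [← Finset.mul_sum]
    ring
  simp_rw [e]
  have iP : Integrable (fun z : Fin n → ℝ => cP z) := by
    simpa using (PG.const (n := n) 1).integrable
  have iS : Integrable (fun z : Fin n → ℝ => ∑ i, ∑ j, cP z *
      (cW z i * cW z j * (cE (c - z) i - cE (c - z) j) ^ 2)) :=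
    integrable_finsetSum _ fun i _ => integrable_finsetSum _ fun j _ => (hp i j).integrable
  have hc := int_comb iS (PG.Phi c).integrable iP (((n : ℝ) + 1) / 2) 1 n
  simp only [one_mul] at hc
  rw [hc, h1, cP_integral, integral_finsetSum _ fun i _ => integrable_finsetSum _ fun j _ => (hp i j).integrable]
  simp_rw [integral_finsetSum _ fun j _ => (hp _ j).integrable, pair_int]
  have e2 : ∑ i : Fin (n + 1), ∑ j : Fin (n + 1), (if i = j then (0 : ℝ) else (Real.pi ^ 2 / 3 - 2)) =
      ((n : ℝ) + 1) * n * (Real.pi ^ 2 / 3 - 2) := by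
    have : ∀ i j : Fin (n + 1), (if i = j then (0 : ℝ) else (Real.pi ^ 2 / 3 - 2)) =
        (Real.pi ^ 2 / 3 - 2) - if i = j then (Real.pi ^ 2 / 3 - 2) else 0 := by
      intro i j; split_ifs <;> simp
    simp_rw [this, Finset.sum_sub_distrib]
    simp
    ring
  simp_rw [← Finset.mul_sum, Finset.sum_add_distrib, e2]
  have hf : (Nat.factorial (n + 2) : ℝ) = ((n : ℝ) + 2) * (((n : ℝ) + 1) * Nat.factorial n) := by
    rw [Nat.factorial_succ, Nat.factorial_succ]; push_cast; ring
  rw [hf]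
  have : (Nat.factorial n : ℝ) ≠ 0 := by positivity
  field_simp
  ring

noncomputable def cG {n : ℕ} (y : Fin n → ℝ) : Fin n → ℝ := fun i => cW y i.castSucc

noncomputable def cGL {n : ℕ} (y : Fin n → ℝ) : (Fin n → ℝ) →L[ℝ] (Fin n → ℝ) :=
  ContinuousLinearMap.pi fun i => cWL y i.castSucc

lemma cG_hasFDerivAt {n : ℕ} (y : Fin n → ℝ) : HasFDerivAt cG (cGL y) y := by
  unfold cGL
  rw [hasFDerivAt_pi]
  intro i
  exact cW_hasFDerivAt i.castSucc y

lemma cW_last_eq {n : ℕ} (y : Fin n → ℝ) : cW y (Fin.last n) = 1 - ∑ j, cG y j := by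
  have := cW_sum y
  rw [Fin.sum_univ_castSucc] at this
  unfold cG
  linarith

lemma cGL_det {n : ℕ} (y : Fin n → ℝ) : (cGL y).det = cP y := by
  rw [ContinuousLinearMap.det, ← LinearMap.det_toMatrix']
  have hM : LinearMap.toMatrix' (cGL y : (Fin n → ℝ) →ₗ[ℝ] (Fin n → ℝ)) =
      Matrix.diagonal (cG y) * (1 + Matrix.replicateCol Unit (fun _ => (-1 : ℝ)) *
        Matrix.replicateRow Unit (cG y)) := by
    ext i j
    rw [Matrix.diagonal_mul, LinearMap.toMatrix'_apply]
    simp only [ContinuousLinearMap.coe_coe, cGL, ContinuousLinearMap.pi_apply]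
    have h1 := cE_single (cW y) j
    rw [cWL_apply]
    have h3 : cE (fun j' => if j' = j then (1 : ℝ) else 0) = cE (Pi.single j (1 : ℝ)) := by
      congr 1
      ext k
      simp [Pi.single_apply]
    first
      | rw [h3, h1]
      | rw [h1]
    simp [Matrix.one_apply, Matrix.mul_apply, cG, Pi.single_apply, sub_eq_add_neg]
  rw [hM, Matrix.det_mul, Matrix.det_diagonal, Matrix.det_one_add_replicateCol_mul_replicateRow,
    cP, Fin.prod_univ_castSucc, cW_last_eq]
  congr 1
  simp [dotProduct]
  ring

lemma cG_injective {n : ℕ} : Function.Injective (cG (n := n)) := by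
  intro y y' h
  have hl : cW y (Fin.last n) = cW y' (Fin.last n) := by rw [cW_last_eq, cW_last_eq, h]
  have hq : cQ y = cQ y' := by
    simp only [cW, cE_last, Real.exp_zero, one_div] at hl
    exact inv_injective hl
  ext i
  have hi := congrFun h i
  simp only [cG, cW, cE_castSucc, hq] at hi
  have := (div_left_inj' (cQ_pos y').ne').1 hi
  exact Real.exp_injective this

lemma cG_range {n : ℕ} : Set.range (cG (n := n)) = {u | (∀ j, 0 < u j) ∧ ∑ j, u j < 1} := by
  ext u
  constructor
  · rintro ⟨y, rfl⟩
    refine ⟨fun j => cW_pos y _, ?_⟩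
    have := cW_last_eq y
    have := cW_pos y (Fin.last n)
    linarith
  · rintro ⟨h1, h2⟩
    have hs : 0 < 1 - ∑ j, u j := by linarith
    refine ⟨fun i => Real.log (u i / (1 - ∑ j, u j)), ?_⟩
    have he : ∀ i, Real.exp (Real.log (u i / (1 - ∑ j, u j))) = u i / (1 - ∑ j, u j) :=
      fun i => Real.exp_log (div_pos (h1 i) hs)
    ext i
    rw [cG, cW, cE_castSucc, cQ_eq]
    simp_rw [he]
    rw [← Finset.sum_div]
    field_simp
    ring

lemma sum_one_null {n : ℕ} : volume {u : Fin n → ℝ | ∑ j, u j = 1} = 0 := by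
  let s : AffineSubspace ℝ (Fin n → ℝ) :=
    { carrier := {u : Fin n → ℝ | ∑ j, u j = 1}
      smul_vsub_vadd_mem' := by
        intro a p1 p2 p3 h1 h2 h3
        simp only [Set.mem_ofPred_eq] at *
        simp [Finset.sum_add_distrib, ← Finset.mul_sum, h1, h2, h3] }
  have hs : s ≠ ⊤ := by
    intro h
    have : (0 : Fin n → ℝ) ∈ s := by rw [h]; trivial
    have h2 : ∑ j, (0 : Fin n → ℝ) j = 1 := this
    simp at h2
  exact Measure.addHaar_affineSubspace volume s hs

lemma simplex_ae {n : ℕ} : {u : Fin n → ℝ | (∀ j, 0 ≤ u j) ∧ ∑ j, u j ≤ 1} =ᵐ[volume]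
    {u : Fin n → ℝ | (∀ j, 0 < u j) ∧ ∑ j, u j < 1} := by
  have h1 : ∀ᵐ u : Fin n → ℝ, ∑ j, u j ≠ 1 := by
    rw [ae_iff]; simpa using sum_one_null
  have h2 : ∀ᵐ u : Fin n → ℝ, ∀ j, u j ≠ 0 := by
    rw [ae_all_iff]
    intro j
    rw [ae_iff]
    simp only [ne_eq, not_not]
    exact Measure.pi_hyperplane (fun _ : Fin n => (volume : Measure ℝ)) j 0
  rw [Filter.eventuallyEq_set]
  filter_upwards [h1, h2] with u hu1 hu2
  constructor
  · rintro ⟨a, b⟩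
    exact ⟨fun j => lt_of_le_of_ne (a j) (hu2 j).symm, lt_of_le_of_ne b hu1⟩
  · rintro ⟨a, b⟩
    exact ⟨fun j => (a j).le, b.le⟩

lemma fillMap_cG {n : ℕ} (y : Fin n → ℝ) : fillMap (n + 1) (cG y) = cW y := by
  ext i
  refine Fin.lastCases ?_ (fun i => ?_) i
  · simp only [fillMap]
    rw [dif_neg (by simp)]
    exact (cW_last_eq y).symm
  · simp only [fillMap]
    rw [dif_pos (by simp)]
    rfl

lemma fillMap_measurable {n : ℕ} : Measurable (fillMap (n + 1)) := by
  rw [measurable_pi_iff]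
  intro i
  unfold fillMap
  by_cases h : (i : ℕ) < n + 1 - 1
  · simp only [h, dif_pos]
    exact measurable_pi_apply _
  · simp only [h, dif_neg, not_false_eq_true]
    fun_prop

lemma simplex_integral {n : ℕ} (h : (Fin (n + 1) → ℝ) → ℝ) (hm : Measurable h) :
    ∫ x, h x ∂(simplexMeasure (n + 1)) = ∫ y : Fin n → ℝ, cP y * h (cW y) := by
  rw [simplexMeasure, integral_map fillMap_measurable.aemeasurable hm.aestronglyMeasurable]
  change ∫ u in {u : Fin n → ℝ | (∀ j, 0 ≤ u j) ∧ ∑ j, u j ≤ 1}, h (fillMap (n + 1) u) = _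
  rw [setIntegral_congr_set simplex_ae, ← cG_range, ← Set.image_univ,
    integral_image_eq_integral_abs_det_fderiv_smul volume MeasurableSet.univ
      (fun y _ => (cG_hasFDerivAt y).hasFDerivWithinAt) cG_injective.injOn, setIntegral_univ]
  congr 1
  ext y
  rw [cGL_det, abs_of_pos (cP_pos y), fillMap_cG, smul_eq_mul]

lemma pointwise {n : ℕ} (τ : ℝ) (hτ : 0 < τ) (β : Fin (n + 1) → ℝ) (hβ : ∀ i, 0 < β i)
    (c : Fin n → ℝ) (hc : ∀ i, c i = Real.log (β i.castSucc) - Real.log (β (Fin.last n)))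
    (y : Fin n → ℝ) :
    cP y * (concreteDensity (n + 1) β τ (cW y) *
          ((((n + 1 : ℕ) : ℝ) * ∑ l, (β l / cW y l ^ τ) * Real.log (cW y l)) / kfun (n + 1) β τ (cW y)
            - (∑ j, Real.log (cW y j)) + (((n + 1 : ℕ) : ℝ) - 1) / τ) ^ 2) =
      (Nat.factorial n * τ ^ n / τ ^ 2) * (cP (c - τ • y) * cPhi c (c - τ • y) ^ 2) := by
  set z := c - τ • y with hz
  set B := cQ y ^ τ * β (Fin.last n) with hB
  have hBpos : 0 < B := mul_pos (Real.rpow_pos_of_pos (cQ_pos y) _) (hβ _)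
  have hcE : ∀ l, β l = β (Fin.last n) * Real.exp (cE c l) := by
    intro l
    refine Fin.lastCases ?_ (fun i => ?_) l
    · simp
    · rw [cE_castSucc, hc, Real.exp_sub, Real.exp_log (hβ _), Real.exp_log (hβ _)]
      have := (hβ (Fin.last n)).ne'
      field_simp
  have hterm : ∀ l, β l / cW y l ^ τ = B * Real.exp (cE z l) := by
    intro l
    rw [hcE l, cW, Real.div_rpow (Real.exp_pos _).le (cQ_pos y).le, ← Real.exp_mul, hz, cE_sub,
      cE_smul, Real.exp_sub, hB, mul_comm (cE y l)]
    have := (Real.rpow_pos_of_pos (cQ_pos y) τ).ne'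
    have := (Real.exp_pos (τ * cE y l)).ne'
    field_simp
  have hterm2 : ∀ l, β l / cW y l ^ (τ + 1) = B * Real.exp (cE z l) / cW y l := by
    intro l
    rw [Real.rpow_add_one (cW_pos y l).ne', ← hterm, div_div]
  have hk : ∑ l, β l / cW y l ^ τ = B * cQ z := by
    simp_rw [hterm, ← Finset.mul_sum, cQ]
  have hPy := (cP_pos y).ne'
  have hQz := (cQ_pos z).ne'
  have hdens : cP y * concreteDensity (n + 1) β τ (cW y) = Nat.factorial n * τ ^ n * cP z := by
    rw [concreteDensity, hk]
    simp_rw [hterm2]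
    rw [Finset.prod_div_distrib, Finset.prod_mul_distrib, Finset.prod_const, Finset.card_univ,
      Fintype.card_fin, Real.rpow_neg (mul_pos hBpos (cQ_pos z)).le, Real.rpow_natCast]
    have e1 : cP z = (∏ l, Real.exp (cE z l)) / cQ z ^ (n + 1) := by
      simp [cP, cW, Finset.prod_div_distrib]
    rw [e1, mul_pow]
    change cP y * ((Nat.factorial n : ℝ) * τ ^ n * (B ^ (n + 1) * cQ z ^ (n + 1))⁻¹ *
      (B ^ (n + 1) * (∏ l, Real.exp (cE z l)) / cP y)) = _
    have := hBpos.ne'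
    field_simp
  have hlog : ∀ l, Real.log (cW y l) = cE (c - z) l / τ - Real.log (cQ y) := by
    intro l
    rw [cW, Real.log_div (Real.exp_pos _).ne' (cQ_pos y).ne', Real.log_exp, hz, sub_sub_cancel,
      cE_smul, mul_div_cancel_left₀ _ hτ.ne']
  have hscore : ((((n + 1 : ℕ) : ℝ) * ∑ l, (β l / cW y l ^ τ) * Real.log (cW y l)) / kfun (n + 1) β τ (cW y)
            - (∑ j, Real.log (cW y j)) + (((n + 1 : ℕ) : ℝ) - 1) / τ) = cPhi c z / τ := by
    rw [kfun, hk]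
    have e1 : (((n + 1 : ℕ) : ℝ) * ∑ l, (β l / cW y l ^ τ) * Real.log (cW y l)) / (B * cQ z) =
        ((n + 1 : ℕ) : ℝ) * ∑ l, cW z l * Real.log (cW y l) := by
      rw [mul_div_assoc, Finset.sum_div]
      congr 1
      refine Finset.sum_congr rfl fun l _ => ?_
      rw [hterm, cW.eq_1 z]
      have := hBpos.ne'
      field_simp
    rw [e1]
    simp_rw [hlog, mul_sub, Finset.sum_sub_distrib, ← Finset.sum_mul, cW_sum]
    rw [cPhi]
    simp only [sub_mul, Finset.sum_sub_distrib, mul_assoc, ← Finset.mul_sum]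
    simp only [← mul_div_assoc, ← Finset.sum_div]
    simp
    field_simp
    ring
  rw [← mul_assoc, hdens, hscore]
  have := hτ.ne'
  field_simp

/-- The τ–τ component of the Fisher information of the Concrete distribution in score
form: `E[(∂log f/∂τ)²]` equals the coefficient of `dτ²` in the information metric. -/
theorem concrete_fisher_tau_tau_score
    (K : ℕ) (hK : 2 ≤ K) (τ : ℝ) (hτ : 0 < τ)
    (β : Fin K → ℝ) (hβ : ∀ i, 0 < β i) :
    ∫ x, concreteDensity K β τ x *
          (((K : ℝ) * ∑ l, (β l / x l ^ τ) * Real.log (x l)) / kfun K β τ x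
            - (∑ j, Real.log (x j)) + ((K : ℝ) - 1) / τ) ^ 2
        ∂(simplexMeasure K)
      = (((K : ℝ) - 1) * ((K : ℝ) * Real.pi ^ 2 / 6 + 1)
          + (1 / 2) * ∑ i, ∑ j, (Real.log (β i) - Real.log (β j)) ^ 2) /
        (((K : ℝ) + 1) * τ ^ 2) := by
  obtain ⟨n, rfl⟩ : ∃ n, K = n + 1 := ⟨K - 1, by omega⟩
  set c : Fin n → ℝ := fun i => Real.log (β i.castSucc) - Real.log (β (Fin.last n)) with hc
  rw [simplex_integral (fun x => concreteDensity (n + 1) β τ x *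
          ((((n + 1 : ℕ) : ℝ) * ∑ l, (β l / x l ^ τ) * Real.log (x l)) / kfun (n + 1) β τ x
            - (∑ j, Real.log (x j)) + (((n + 1 : ℕ) : ℝ) - 1) / τ) ^ 2)
    (by unfold concreteDensity kfun; fun_prop)]
  simp_rw [pointwise τ hτ β hβ c (fun i => rfl)]
  rw [integral_const_mul,
    Measure.integral_comp_smul volume (fun u => cP (c - u) * cPhi c (c - u) ^ 2) τ,
    integral_sub_left_eq_self (fun z => cP z * cPhi c z ^ 2) volume c, phi_sq]
  have hE : ∀ i j, cE c i - cE c j = Real.log (β i) - Real.log (β j) := by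
    have : ∀ i, cE c i = Real.log (β i) - Real.log (β (Fin.last n)) := by
      intro i
      refine Fin.lastCases ?_ (fun i => ?_) i <;> simp [hc]
    intro i j
    rw [this, this]
    ring
  simp_rw [hE]
  rw [Module.finrank_fin_fun, abs_of_pos (by positivity), smul_eq_mul]
  have hf : (Nat.factorial n : ℝ) ≠ 0 := by positivity
  push_cast
  field_simp
  ring
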